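/- Let 0 ≤ α < γ ≤ 1. Then the two-stage max–min value computes the α–γ expectation: sup_{w ∈ W_α} inf_{w' ∈ W_γ} (1/(γ−α)) Σ_{i=1}^n T_i p_i (w_i − w'_i) = E_{α,γ}(μ_T) = (1/(γ−α)) ∫_α^γ F⁻¹(s) ds. -/

import Mathlib

open MeasureTheory

/-- The discrete measure `μ_T = Σ_i p_i δ_{T_i}`. -/
noncomputable def muT {n : ℕ} (p T : Fin n → ℝ) : Measure ℝ :=
  ∑ i, ENNReal.ofReal (p i) • Measure.dirac (T i)

/-- Generalized inverse of the cdf `t ↦ μ_T (Iic t)` of `μ_T`. -/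
noncomputable def dFinv {n : ℕ} (p T : Fin n → ℝ) (q : ℝ) : ℝ :=
  sInf {t : ℝ | q ≤ (muT p T (Set.Iic t)).toReal}

/-- The α–γ expectation of `μ_T`. -/
noncomputable def dEag {n : ℕ} (p T : Fin n → ℝ) (a g : ℝ) : ℝ :=
  (1 / (g - a)) * ∫ s in a..g, dFinv p T s

/-- The polytope `W_β = {w ∈ [0,1]^n : Σ_i w_i p_i = 1 − β}`. -/
def Wset {n : ℕ} (p : Fin n → ℝ) (β : ℝ) : Set (Fin n → ℝ) :=
  {w | (∀ i, w i ∈ Set.Icc (0:ℝ) 1) ∧ ∑ i, w i * p i = 1 - β}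

/-! For `0 < β < 1` put `t = quantile μ β`, where `μ` is the law of `X`. If `w` takes values in
`[0, 1]` and has mean `1 - β`, then `E[X w] = (1 - β) t + E[(X - t) w] ≤ (1 - β) t + E[(X - t)⁺]`,
and the right-hand side is the tail integral `∫ s in β..1, quantile μ s` because `quantile μ` pushes
the uniform law on `(0, 1)` to `μ`. Equality holds as soon as `w = 1` on `{X > t}` and `w = 0` on
`{X < t}`; the constraint on the mean can be met by splitting the atom at `t`, since
`μ (t, ∞) ≤ 1 - β ≤ μ [t, ∞)`. The objective separates in `w` and `w'`, so the max–min value is the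
difference of the tail integrals from `α` and from `γ`. -/

open Set Filter Topology ProbabilityTheory

theorem sSup_sInf_mul_sub {ι κ : Type*} {A : Set ι} {B : Set κ} {f : ι → ℝ} {g : κ → ℝ}
    {a b c : ℝ} (hc : 0 ≤ c) (ha : IsGreatest (f '' A) a) (hb : IsGreatest (g '' B) b) :
    sSup ((fun x => sInf ((fun y => c * (f x - g y)) '' B)) '' A) = c * (a - b) := by
  have hinner (x : ι) : sInf ((fun y => c * (f x - g y)) '' B) = c * (f x - b) := by
    have hanti : Antitone fun r => c * (f x - r) := fun _ _ h =>
      mul_le_mul_of_nonneg_left (sub_le_sub_left h _) hc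
    rw [← (hanti.map_isGreatest hb).csInf_eq, image_image]
  have hmono : Monotone fun r => c * (r - b) := fun _ _ h =>
    mul_le_mul_of_nonneg_left (sub_le_sub_right h _) hc
  simp only [hinner]
  rw [← (hmono.map_isGreatest ha).csSup_eq, image_image]

section Quantile

/-- The lower quantile of level `q`, that is, the generalized inverse at `q` of the distribution
function of `μ`. It may be a junk value outside `(0, 1)`: the set is all of `ℝ` for `q ≤ 0`, and
empty if the distribution function stays below `q`; in both cases `sInf` returns `0`. -/
noncomputable def quantile (μ : Measure ℝ) (q : ℝ) : ℝ :=
  sInf {t : ℝ | q ≤ μ.real (Iic t)}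

variable (μ : Measure ℝ) [IsProbabilityMeasure μ] {q : ℝ}

theorem le_measureReal_Iic_quantile (hq : q < 1) : q ≤ μ.real (Iic (quantile μ q)) := by
  simp only [quantile, ← cdf_eq_real]
  have hne : {t : ℝ | q ≤ cdf μ t}.Nonempty :=
    ((tendsto_cdf_atTop μ).eventually (lt_mem_nhds hq)).exists.imp fun _ h => h.le
  refine ge_of_tendsto (((cdf μ).right_continuous _).mono Ioi_subset_Ici_self) ?_
  filter_upwards [self_mem_nhdsWithin] with y hy
  obtain ⟨t, ht, hty⟩ := exists_lt_of_csInf_lt hne hy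
  exact ht.trans (monotone_cdf μ hty.le)

theorem quantile_le_iff (hq : q ∈ Ioo (0 : ℝ) 1) {x : ℝ} :
    quantile μ q ≤ x ↔ q ≤ μ.real (Iic x) := by
  have hbdd : BddBelow {t : ℝ | q ≤ μ.real (Iic t)} := by
    simp only [← cdf_eq_real]
    obtain ⟨b, hb⟩ := ((tendsto_cdf_atBot μ).eventually (gt_mem_nhds hq.1)).exists
    exact ⟨b, fun t ht => le_of_not_gt fun hlt =>
      (ht.trans (monotone_cdf μ hlt.le)).not_gt hb⟩
  exact ⟨fun h => (le_measureReal_Iic_quantile μ hq.2).trans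
    (measureReal_mono (Iic_subset_Iic.2 h)), fun h => csInf_le hbdd h⟩

theorem monotoneOn_quantile : MonotoneOn (quantile μ) (Ioo 0 1) := fun _ ha _ hb hab =>
  (quantile_le_iff μ ha).2 (hab.trans (le_measureReal_Iic_quantile μ hb.2))

theorem aemeasurable_quantile : AEMeasurable (quantile μ) (volume.restrict (Ioo 0 1)) :=
  aemeasurable_restrict_of_monotoneOn measurableSet_Ioo (monotoneOn_quantile μ)

theorem map_quantile : (volume.restrict (Ioo 0 1)).map (quantile μ) = μ := by
  refine Measure.ext_of_Iic _ _ fun x => ?_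
  have hset : quantile μ ⁻¹' Iic x ∩ Ioo 0 1 = Ioo 0 1 ∩ Iic (μ.real (Iic x)) := by
    ext s
    simp only [mem_inter_iff, mem_preimage, mem_Iic, and_comm (b := s ∈ Ioo 0 1)]
    exact and_congr_right fun hs => quantile_le_iff μ hs
  have hae : (Ioo 0 1 ∩ Iic (μ.real (Iic x)) : Set ℝ) =ᵐ[volume] Ioc 0 (μ.real (Iic x)) := by
    have h := (Ioo_ae_eq_Ioc (μ := volume) (a := (0 : ℝ)) (b := 1)).inter
      (ae_eq_refl (Iic (μ.real (Iic x))))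
    rwa [Ioc_inter_Iic, min_eq_right measureReal_le_one] at h
  rw [Measure.map_apply_of_aemeasurable (aemeasurable_quantile μ) measurableSet_Iic,
    Measure.restrict_apply' measurableSet_Ioo, hset, measure_congr hae, Real.volume_Ioc, sub_zero,
    ofReal_measureReal]

theorem measureReal_Iio_quantile_le (hq : q ∈ Ioo (0 : ℝ) 1) :
    μ.real (Iio (quantile μ q)) ≤ q := by
  have hsub : quantile μ ⁻¹' Iio (quantile μ q) ∩ Ioo 0 1 ⊆ Ioo 0 q := fun s hs =>
    ⟨hs.2.1, lt_of_not_ge fun hqs => (monotoneOn_quantile μ hq hs.2 hqs).not_gt hs.1⟩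
  calc μ.real (Iio (quantile μ q))
      = ((volume.restrict (Ioo 0 1)).map (quantile μ)).real (Iio (quantile μ q)) := by
        rw [map_quantile]
    _ = volume.real (quantile μ ⁻¹' Iio (quantile μ q) ∩ Ioo 0 1) := by
        rw [measureReal_def, Measure.map_apply_of_aemeasurable (aemeasurable_quantile μ)
          measurableSet_Iio, Measure.restrict_apply' measurableSet_Ioo, measureReal_def]
    _ ≤ volume.real (Ioo 0 q) := measureReal_mono hsub measure_Ioo_lt_top.ne
    _ = q := by rw [Real.volume_real_Ioo_of_le hq.1.le, sub_zero]

theorem integral_comp_quantile {f : ℝ → ℝ} (hf : AEStronglyMeasurable f μ) :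
    ∫ s in 0..1, f (quantile μ s) = ∫ x, f x ∂μ := by
  conv_rhs => rw [← map_quantile μ]
  rw [integral_map (aemeasurable_quantile μ) (by rwa [map_quantile]),
    intervalIntegral.integral_of_le zero_le_one, integral_Ioc_eq_integral_Ioo]

variable {μ}

theorem intervalIntegrable_quantile (hμ : Integrable id μ) {a b : ℝ} (ha : a ∈ Icc (0 : ℝ) 1)
    (hb : b ∈ Icc (0 : ℝ) 1) : IntervalIntegrable (quantile μ) volume a b := by
  suffices IntervalIntegrable (quantile μ) volume 0 1 from
    this.mono_set (uIcc_subset_uIcc (by rwa [uIcc_of_le zero_le_one])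
      (by rwa [uIcc_of_le zero_le_one]))
  rw [← map_quantile μ] at hμ
  rw [intervalIntegrable_iff_integrableOn_Ioo_of_le zero_le_one]
  exact hμ.comp_aemeasurable (aemeasurable_quantile μ)

/-- The Rockafellar–Uryasev formula for the superquantile, without the factor `1 / (1 - q)`. -/
theorem integral_quantile_eq (hμ : Integrable id μ) (hq : q ∈ Ioo (0 : ℝ) 1) :
    ∫ s in q..1, quantile μ s =
      (1 - q) * quantile μ q + ∫ x, max (x - quantile μ q) 0 ∂μ := by
  set t := quantile μ q
  have hq_mem : q ∈ Icc (0 : ℝ) 1 := Ioo_subset_Icc_self hq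
  have hint {a b : ℝ} (ha : a ∈ Icc (0 : ℝ) 1) (hb : b ∈ Icc (0 : ℝ) 1) :
      IntervalIntegrable (fun s => max (quantile μ s - t) 0) volume a b :=
    have h := (intervalIntegrable_quantile hμ ha hb).sub (intervalIntegrable_const (c := t))
    ⟨h.1.pos_part, h.2.pos_part⟩
  have hlow : ∫ s in 0..q, max (quantile μ s - t) 0 = 0 := by
    rw [intervalIntegral.integral_congr_Ioo_of_le (g := 0) hq.1.le]
    · simp
    · exact fun s hs => max_eq_right <| sub_nonpos.2 <|
        monotoneOn_quantile μ ⟨hs.1, hs.2.trans hq.2⟩ hq hs.2.le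
  have hhigh : ∫ s in q..1, max (quantile μ s - t) 0 = ∫ s in q..1, (quantile μ s - t) :=
    intervalIntegral.integral_congr_Ioo_of_le hq.2.le fun s hs => max_eq_left <| sub_nonneg.2 <|
      monotoneOn_quantile μ hq ⟨hq.1.trans hs.1, hs.2⟩ hs.1.le
  have hmax : ∫ x, max (x - t) 0 ∂μ = ∫ s in q..1, (quantile μ s - t) := by
    rw [← integral_comp_quantile μ (by fun_prop),
      ← intervalIntegral.integral_add_adjacent_intervals (hint (by simp) hq_mem)
        (hint hq_mem (by simp)), hlow, zero_add, hhigh]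
  rw [hmax, intervalIntegral.integral_sub (intervalIntegrable_quantile hμ hq_mem (by simp))
    intervalIntegrable_const, intervalIntegral.integral_const, smul_eq_mul]
  ring

end Quantile

section WeightSet

variable {Ω : Type*} [MeasurableSpace Ω]

/-- The analogue of `Wset` on a measure space: the `[0, 1]`-valued weights of mean `1 - β`. -/
def weightSet (P : Measure Ω) (β : ℝ) : Set (Ω → ℝ) :=
  {w | AEStronglyMeasurable w P ∧ (∀ ω, w ω ∈ Icc (0 : ℝ) 1) ∧ ∫ ω, w ω ∂P = 1 - β}

variable {P : Measure Ω} {X w : Ω → ℝ} {α β γ : ℝ}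

namespace weightSet

theorem const_mem [IsProbabilityMeasure P] (hβ : β ∈ Icc (0 : ℝ) 1) :
    (fun _ => 1 - β) ∈ weightSet P β :=
  ⟨aestronglyMeasurable_const, fun _ => ⟨sub_nonneg.2 hβ.2, sub_le_self 1 hβ.1⟩, by simp⟩

theorem integrable_mul (hw : w ∈ weightSet P β) (hX : Integrable X P) :
    Integrable (fun ω => X ω * w ω) P :=
  hX.mul_bdd (c := 1) hw.1 <| .of_forall fun ω => by
    simpa only [Real.norm_of_nonneg (hw.2.1 ω).1] using (hw.2.1 ω).2

theorem comp_mem (hX : AEMeasurable X P) {v : ℝ → ℝ} (hv : v ∈ weightSet (P.map X) β) :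
    (fun ω => v (X ω)) ∈ weightSet P β :=
  ⟨hv.1.comp_aemeasurable hX, fun ω => hv.2.1 (X ω), by rw [← integral_map hX hv.1, hv.2.2]⟩

theorem integrable [IsFiniteMeasure P] (hw : w ∈ weightSet P β) : Integrable w P := by
  simpa only [one_mul] using integrable_mul hw (integrable_const 1)

theorem ae_eq_zero [IsFiniteMeasure P] (hw : w ∈ weightSet P 1) : w =ᵐ[P] 0 :=
  (integral_eq_zero_iff_of_nonneg (fun ω => (hw.2.1 ω).1) (integrable hw)).1 <| by
    rw [hw.2.2, sub_self]

theorem one_sub_mem [IsProbabilityMeasure P] (hw : w ∈ weightSet P β) :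
    (fun ω => 1 - w ω) ∈ weightSet P (1 - β) :=
  ⟨aestronglyMeasurable_const.sub hw.1,
    fun ω => ⟨sub_nonneg.2 (hw.2.1 ω).2, sub_le_self _ (hw.2.1 ω).1⟩, by
    rw [integral_sub (integrable_const 1) (integrable hw), hw.2.2]
    simp⟩

theorem ae_eq_one [IsProbabilityMeasure P] (hw : w ∈ weightSet P 0) : w =ᵐ[P] 1 := by
  have h := one_sub_mem hw
  rw [sub_zero] at h
  filter_upwards [ae_eq_zero h] with ω hω
  exact (sub_eq_zero.1 hω).symm

theorem integral_mul_eq [IsFiniteMeasure P] (hw : w ∈ weightSet P β) (hX : Integrable X P)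
    (t : ℝ) : ∫ ω, X ω * w ω ∂P = (1 - β) * t + ∫ ω, (X ω - t) * w ω ∂P := by
  simp only [sub_mul]
  rw [integral_sub (integrable_mul hw hX) ((integrable hw).const_mul t), integral_const_mul,
    hw.2.2]
  ring

theorem integral_mul_le [IsFiniteMeasure P] (hw : w ∈ weightSet P β) (hX : Integrable X P)
    (t : ℝ) : ∫ ω, X ω * w ω ∂P ≤ (1 - β) * t + ∫ ω, max (X ω - t) 0 ∂P := by
  have hXt : Integrable (fun ω => X ω - t) P := hX.sub (integrable_const t)
  rw [integral_mul_eq hw hX t]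
  refine add_le_add_right (integral_mono (integrable_mul hw hXt) hXt.pos_part fun ω => ?_) _
  calc (X ω - t) * w ω ≤ max (X ω - t) 0 * w ω :=
        mul_le_mul_of_nonneg_right (le_max_left _ _) (hw.2.1 ω).1
    _ ≤ max (X ω - t) 0 := mul_le_of_le_one_right (le_max_right _ _) (hw.2.1 ω).2

end weightSet

theorem exists_mem_weightSet_sub_mul_eq_max {μ : Measure ℝ} [IsFiniteMeasure μ] {t : ℝ}
    (hIoi : μ.real (Ioi t) ≤ 1 - β) (hIci : 1 - β ≤ μ.real (Ici t)) :
    ∃ v ∈ weightSet μ β, ∀ x, (x - t) * v x = max (x - t) 0 := by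
  obtain ⟨a, b, ha, hb, hab, hmean⟩ : 1 - β ∈ segment ℝ (μ.real (Ioi t)) (μ.real (Ici t)) := by
    rw [segment_eq_Icc (hIoi.trans hIci)]
    exact ⟨hIoi, hIci⟩
  have hintegrable {s : Set ℝ} (hs : MeasurableSet s) (c : ℝ) :
      Integrable (fun x => c * s.indicator 1 x) μ :=
    ((integrable_const 1).indicator hs).const_mul c
  refine ⟨fun x => a * (Ioi t).indicator 1 x + b * (Ici t).indicator 1 x, ⟨?_, fun x => ?_, ?_⟩,
    fun x => ?_⟩
  · exact ((hintegrable measurableSet_Ioi a).add (hintegrable measurableSet_Ici b)).1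
  · rcases lt_trichotomy x t with h | rfl | h
    · simp [h, h.le]
    · simpa [hb] using hab ▸ le_add_of_nonneg_left ha
    · simp [h, h.le, hab]
  · rwa [integral_add (hintegrable measurableSet_Ioi a) (hintegrable measurableSet_Ici b),
      integral_const_mul, integral_const_mul, integral_indicator_one measurableSet_Ioi,
      integral_indicator_one measurableSet_Ici]
  · rcases lt_trichotomy x t with h | rfl | h
    · simp [h, h.le]
    · simp
    · simp [h, h.le, hab]

theorem exists_mem_weightSet_sub_quantile_mul_eq_max (μ : Measure ℝ) [IsProbabilityMeasure μ]
    (hβ : β ∈ Ioo (0 : ℝ) 1) :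
    ∃ v ∈ weightSet μ β, ∀ x, (x - quantile μ β) * v x = max (x - quantile μ β) 0 := by
  apply exists_mem_weightSet_sub_mul_eq_max
  · rw [← compl_Iic, probReal_compl_eq_one_sub measurableSet_Iic]
    exact sub_le_sub_left (le_measureReal_Iic_quantile μ hβ.2) 1
  · rw [← compl_Iio, probReal_compl_eq_one_sub measurableSet_Iio]
    exact sub_le_sub_left (measureReal_Iio_quantile_le μ hβ) 1

theorem integrable_id_map (hX : Integrable X P) : Integrable id (P.map X) :=
  (integrable_map_measure aestronglyMeasurable_id hX.aemeasurable).2 hX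

variable [IsProbabilityMeasure P]

theorem isGreatest_integral_quantile_of_mem_Ioo (hX : Integrable X P)
    (hβ : β ∈ Ioo (0 : ℝ) 1) :
    IsGreatest ((fun w => ∫ ω, X ω * w ω ∂P) '' weightSet P β)
      (∫ s in β..1, quantile (P.map X) s) := by
  have := Measure.isProbabilityMeasure_map hX.aemeasurable
  set t := quantile (P.map X) β
  have htail : ∫ s in β..1, quantile (P.map X) s = (1 - β) * t + ∫ ω, max (X ω - t) 0 ∂P := by
    rw [integral_quantile_eq (integrable_id_map hX) hβ,
      integral_map hX.aemeasurable (by fun_prop)]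
  rw [htail]
  refine ⟨?_, forall_mem_image.2 fun w hw => weightSet.integral_mul_le hw hX t⟩
  obtain ⟨v, hv, hvt⟩ := exists_mem_weightSet_sub_quantile_mul_eq_max (P.map X) hβ
  have hw := weightSet.comp_mem hX.aemeasurable hv
  exact ⟨_, hw, by simp only [weightSet.integral_mul_eq hw hX t, hvt, t]⟩

theorem isGreatest_integral_quantile (hX : Integrable X P) (hβ : β ∈ Icc (0 : ℝ) 1) :
    IsGreatest ((fun w => ∫ ω, X ω * w ω ∂P) '' weightSet P β)
      (∫ s in β..1, quantile (P.map X) s) := by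
  have isGreatest_of_forall_eq {c : ℝ} (h : ∀ w ∈ weightSet P β, ∫ ω, X ω * w ω ∂P = c) :
      IsGreatest ((fun w => ∫ ω, X ω * w ω ∂P) '' weightSet P β) c :=
    ⟨⟨_, weightSet.const_mem hβ, h _ (weightSet.const_mem hβ)⟩,
      forall_mem_image.2 fun w hw => (h w hw).le⟩
  rcases hβ.1.eq_or_lt with rfl | h0
  · refine isGreatest_of_forall_eq fun w hw => ?_
    have := Measure.isProbabilityMeasure_map (μ := P) hX.aemeasurable
    calc ∫ ω, X ω * w ω ∂P = ∫ ω, X ω ∂P :=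
          integral_congr_ae ((weightSet.ae_eq_one hw).mono fun ω hω => by simp [hω])
      _ = ∫ x, x ∂P.map X := (integral_map hX.aemeasurable aestronglyMeasurable_id).symm
      _ = ∫ s in 0..1, quantile (P.map X) s :=
          (integral_comp_quantile (P.map X) aestronglyMeasurable_id).symm
  rcases hβ.2.eq_or_lt with rfl | h1
  · refine isGreatest_of_forall_eq fun w hw => ?_
    rw [intervalIntegral.integral_same]
    exact integral_eq_zero_of_ae ((weightSet.ae_eq_zero hw).mono fun ω hω => by simp [hω])
  · exact isGreatest_integral_quantile_of_mem_Ioo hX ⟨h0, h1⟩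

theorem maxmin_eq_alpha_gamma_expectation_general (hX : Integrable X P) (hα : 0 ≤ α) (hαγ : α < γ)
    (hγ : γ ≤ 1) :
    sSup ((fun w => sInf ((fun w' => (1 / (γ - α)) * ∫ ω, X ω * (w ω - w' ω) ∂P) ''
      weightSet P γ)) '' weightSet P α) =
      (1 / (γ - α)) * ∫ s in α..γ, quantile (P.map X) s := by
  have hα' : α ∈ Icc (0 : ℝ) 1 := ⟨hα, hαγ.le.trans hγ⟩
  have hγ' : γ ∈ Icc (0 : ℝ) 1 := ⟨hα.trans hαγ.le, hγ⟩
  have hseparate : ∀ w ∈ weightSet P α, ∀ w' ∈ weightSet P γ,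
      ∫ ω, X ω * (w ω - w' ω) ∂P = ∫ ω, X ω * w ω ∂P - ∫ ω, X ω * w' ω ∂P := fun w hw w' hw' => by
    simp only [mul_sub, integral_sub (weightSet.integrable_mul hw hX)
      (weightSet.integrable_mul hw' hX)]
  have htails : (∫ s in α..1, quantile (P.map X) s) - ∫ s in γ..1, quantile (P.map X) s =
      ∫ s in α..γ, quantile (P.map X) s := by
    have := Measure.isProbabilityMeasure_map (μ := P) hX.aemeasurable
    have hid := integrable_id_map hX
    rw [← intervalIntegral.integral_add_adjacent_intervals
      (intervalIntegrable_quantile hid hα' hγ') (intervalIntegrable_quantile hid hγ' (by simp)),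
      add_sub_cancel_right]
  rw [← htails, ← sSup_sInf_mul_sub (one_div_nonneg.2 (sub_nonneg.2 hαγ.le))
    (isGreatest_integral_quantile hX hα') (isGreatest_integral_quantile hX hγ')]
  exact congrArg sSup <| image_congr fun w hw => congrArg sInf <| image_congr fun w' hw' => by
    rw [hseparate w hw w' hw']

end WeightSet

section DiscreteMeasure

variable {ι : Type*} [Fintype ι] [MeasurableSpace ι] {p : ι → ℝ}

/-- The measure on a finite type that gives `i` the mass `p i`. -/
noncomputable def discreteMeasure (p : ι → ℝ) : Measure ι :=
  ∑ i, ENNReal.ofReal (p i) • Measure.dirac i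

theorem isProbabilityMeasure_discreteMeasure (hp : ∀ i, 0 ≤ p i) (hsum : ∑ i, p i = 1) :
    IsProbabilityMeasure (discreteMeasure p) := by
  constructor
  simp [discreteMeasure, ← ENNReal.ofReal_sum_of_nonneg fun i _ => hp i, hsum]

variable [MeasurableSingletonClass ι]

theorem integral_discreteMeasure (hp : ∀ i, 0 ≤ p i) (f : ι → ℝ) :
    ∫ i, f i ∂discreteMeasure p = ∑ i, f i * p i := by
  rw [discreteMeasure, integral_finsetSum_measure fun i _ =>
    (integrable_dirac enorm_lt_top).smul_measure ENNReal.ofReal_ne_top]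
  simp [integral_smul_measure, ENNReal.toReal_ofReal (hp _), mul_comm]

end DiscreteMeasure

theorem dEag_eq_integral_quantile {n : ℕ} (p T : Fin n → ℝ) (a g : ℝ) :
    dEag p T a g = (1 / (g - a)) * ∫ s in a..g, quantile (muT p T) s := rfl

theorem map_discreteMeasure {n : ℕ} (p T : Fin n → ℝ) : (discreteMeasure p).map T = muT p T := by
  rw [discreteMeasure, Measure.map_finset_sum' Measurable.of_discrete.aemeasurable]
  simp [muT, Measure.map_smul, Measure.map_dirac]

theorem weightSet_discreteMeasure {n : ℕ} {p : Fin n → ℝ} (hp : ∀ i, 0 ≤ p i) (β : ℝ) :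
    weightSet (discreteMeasure p) β = Wset p β := by
  ext w
  simp only [weightSet, Wset, mem_ofPred_eq, integral_discreteMeasure hp]
  exact and_iff_right Measurable.of_discrete.aestronglyMeasurable

/-- The two-stage max–min value computes the α–γ expectation:
`sup_{w∈W_α} inf_{w'∈W_γ} (1/(γ−α)) Σ_i T_i p_i (w_i − w'_i) = E_{α,γ}(μ_T)`. -/
theorem maxmin_eq_alpha_gamma_expectation
    {n : ℕ} (hn : 1 ≤ n) (p T : Fin n → ℝ)
    (hp : ∀ i, 0 < p i) (hsum : ∑ i, p i = 1)
    (α γ : ℝ) (h0 : 0 ≤ α) (h1 : α < γ) (h2 : γ ≤ 1) :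
    sSup ((fun w =>
        sInf ((fun w' => (1 / (γ - α)) * ∑ i, T i * p i * (w i - w' i)) ''
          Wset p γ)) '' Wset p α) = dEag p T α γ := by
  have hp' : ∀ i, 0 ≤ p i := fun i => (hp i).le
  have := isProbabilityMeasure_discreteMeasure hp' hsum
  have h := maxmin_eq_alpha_gamma_expectation_general (P := discreteMeasure p) (X := T) .of_finite
    h0 h1 h2
  simpa only [dEag_eq_integral_quantile, weightSet_discreteMeasure hp',
    integral_discreteMeasure hp', map_discreteMeasure, mul_right_comm (T _) _ (p _)] using h
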